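/- Let w(t) = log|(1+t)/(1−t)| for t > 0, t ≠ 1. For every ζ ∈ ℂ with −1 < Re ζ < 1 and ζ ≠ 0, the function t ↦ t^{ζ−1} w(t) is integrable on (0,∞) and ∫₀^∞ t^{ζ} w(t) dt/t = (π/ζ) · tan(πζ/2). -/

import Mathlib

open MeasureTheory

lemma aux_integrable {μ : Measure ℝ} {F : ℕ → ℝ → ℂ} {f : ℝ → ℂ}
    (hf : AEStronglyMeasurable f μ)
    (hF : ∀ i, Integrable (F i) μ) (hs : Summable fun i => ∫ a, ‖F i a‖ ∂μ)
    (h : ∀ᵐ a ∂μ, HasSum (fun i => F i a) (f a)) :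
    Integrable f μ := by
  refine ⟨hf, ?_⟩
  have h1 : ∫⁻ a, ‖f a‖ₑ ∂μ ≤ ∫⁻ a, ∑' i, ‖F i a‖ₑ ∂μ := by
    apply lintegral_mono_ae
    filter_upwards [h] with a ha
    rw [← ha.tsum_eq]
    exact enorm_tsum_le_tsum_enorm
  refine lt_of_le_of_lt h1 ?_
  rw [lintegral_tsum (fun i => (hF i).1.enorm)]
  have h2 : ∀ i, ∫⁻ a, ‖F i a‖ₑ ∂μ = ENNReal.ofReal (∫ a, ‖F i a‖ ∂μ) := fun i =>
    (ofReal_integral_norm_eq_lintegral_enorm (hF i)).symm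
  simp_rw [h2]
  exact hs.tsum_ofReal_lt_top

lemma aux_summable (x : ℝ) (hx : -1 < x) :
    Summable fun k : ℕ => 2 / (2 * (k:ℝ) + 1) * (1 / (x + 2 * k + 1)) := by
  rw [← summable_nat_add_iff 1]
  have h := (summable_nat_add_iff 1).2 (Real.summable_one_div_nat_pow.2 (one_lt_two))
  refine Summable.of_nonneg_of_le (fun k => ?_) (fun k => ?_) h
  · have : (0:ℝ) ≤ k := k.cast_nonneg
    have : 0 < x + 2 * ((k + 1 : ℕ) : ℝ) + 1 := by push_cast; linarith
    positivity
  · have : (0:ℝ) ≤ k := k.cast_nonneg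
    push_cast
    rw [div_mul_div_comm, div_le_div_iff₀ (by apply mul_pos <;> linarith) (by positivity)]
    nlinarith

noncomputable def auxw (t : ℝ) : ℂ := (Real.log |(1 + t) / (1 - t)| : ℂ)

lemma auxw_meas : Measurable auxw := by
  unfold auxw; fun_prop

lemma auxw_inv {t : ℝ} (ht : 0 < t) : auxw t⁻¹ = auxw t := by
  unfold auxw
  have : (1 + t⁻¹) / (1 - t⁻¹) = - ((1 + t) / (1 - t)) := by
    rcases eq_or_ne t 1 with rfl | h
    · simp
    · have : 1 - t ≠ 0 := sub_ne_zero.2 h.symm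
      have : t - 1 ≠ 0 := sub_ne_zero.2 h
      have : 1 - t⁻¹ ≠ 0 := by
        rw [sub_ne_zero]; intro h'; apply h; rw [eq_comm, inv_eq_one] at h'; exact h'
      field_simp
      ring
  rw [this, abs_neg]

lemma aux_key (ζ : ℂ) (h1 : -1 < ζ.re) :
    IntegrableOn (fun t : ℝ => (t : ℂ) ^ (ζ - 1) * auxw t) (Set.Ioo 0 1) ∧
    HasSum (fun k : ℕ => 2 / (2 * (k:ℂ) + 1) * (1 / (ζ + 2 * k + 1)))
      (∫ t in Set.Ioo (0:ℝ) 1, (t : ℂ) ^ (ζ - 1) * auxw t) := by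
  set F : ℕ → ℝ → ℂ := fun k t => 2 / (2 * (k:ℂ) + 1) * (t : ℂ) ^ (ζ + 2 * k) with hFdef
  have hre : ∀ k : ℕ, -1 < (ζ + 2 * (k:ℂ)).re := fun k => by
    have : (0:ℝ) ≤ k := k.cast_nonneg
    simp; linarith
  have hF : ∀ k, Integrable (F k) (volume.restrict (Set.Ioo 0 1)) := fun k => by
    have := (intervalIntegral.intervalIntegrable_cpow' (a := 0) (b := 1) (hre k))
    rw [intervalIntegrable_iff_integrableOn_Ioo_of_le zero_le_one] at this
    exact this.const_mul _
  have hI : ∀ k, ∫ t in Set.Ioo (0:ℝ) 1, F k t = 2 / (2 * (k:ℂ) + 1) * (1 / (ζ + 2 * k + 1)) := by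
    intro k
    have hne : ζ + 2 * (k:ℂ) + 1 ≠ 0 := by
      intro h
      have := congrArg Complex.re h
      have h' := hre k
      rw [Complex.add_re] at this
      simp only [Complex.one_re, Complex.zero_re] at this
      linarith
    rw [integral_const_mul, ← integral_Ioc_eq_integral_Ioo,
      ← intervalIntegral.integral_of_le zero_le_one, integral_cpow (Or.inl (hre k))]
    simp [Complex.zero_cpow hne]
  have hN : ∀ k, ∫ t in Set.Ioo (0:ℝ) 1, ‖F k t‖
      = 2 / (2 * (k:ℝ) + 1) * (1 / (ζ.re + 2 * k + 1)) := by
    intro k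
    have e : ∀ t ∈ Set.Ioo (0:ℝ) 1, ‖F k t‖ = 2 / (2 * (k:ℝ) + 1) * t ^ (ζ.re + 2 * k) := by
      intro t ht
      simp only [hFdef]
      rw [norm_mul, Complex.norm_cpow_eq_rpow_re_of_pos ht.1]
      congr 1
      · have : (2 / (2 * (k:ℂ) + 1)) = ((2 / (2 * (k:ℝ) + 1) : ℝ) : ℂ) := by push_cast; rfl
        rw [this, Complex.norm_real, Real.norm_of_nonneg (by positivity)]
      · simp
    have h' := hre k
    have h'' : -1 < ζ.re + 2 * (k:ℝ) := by simpa using h'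
    rw [setIntegral_congr_fun measurableSet_Ioo e]
    rw [integral_const_mul, ← integral_Ioc_eq_integral_Ioo,
      ← intervalIntegral.integral_of_le zero_le_one, integral_rpow (Or.inl h'')]
    rw [Real.zero_rpow (by linarith)]
    simp
  have hS : Summable fun k => ∫ t in Set.Ioo (0:ℝ) 1, ‖F k t‖ := by
    simp_rw [hN]; exact aux_summable _ h1
  have hsum : ∀ t ∈ Set.Ioo (0:ℝ) 1, HasSum (fun k => F k t) ((t : ℂ) ^ (ζ - 1) * auxw t) := by
    intro t ht
    have ht0 : (t:ℂ) ≠ 0 := by exact_mod_cast ht.1.ne'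
    have h := Real.hasSum_log_sub_log_of_abs_lt_one (x := t) (by rw [abs_lt]; constructor <;> linarith [ht.1, ht.2])
    have hw : auxw t = ((Real.log (1 + t) - Real.log (1 - t) : ℝ) : ℂ) := by
      unfold auxw
      have a1 : 0 < 1 + t := by linarith [ht.1]
      have a2 : 0 < 1 - t := by linarith [ht.2]
      rw [Real.log_abs, Real.log_div a1.ne' a2.ne']
    rw [hw]
    have h2 := (Complex.hasSum_ofReal.2 h).mul_left ((t:ℂ) ^ (ζ - 1))
    convert! h2 using 2 with k
    simp only [hFdef]
    have : (t:ℂ) ^ (ζ + 2 * k) = (t:ℂ) ^ (ζ - 1) * (t:ℂ) ^ (2 * k + 1) := by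
      rw [← Complex.cpow_natCast, ← Complex.cpow_add _ _ ht0]
      congr 1; push_cast; ring
    rw [this]
    push_cast
    ring
  have hae : ∀ᵐ t ∂(volume.restrict (Set.Ioo (0:ℝ) 1)),
      HasSum (fun k => F k t) ((t : ℂ) ^ (ζ - 1) * auxw t) :=
    (ae_restrict_iff' measurableSet_Ioo).2 (Filter.Eventually.of_forall hsum)
  refine ⟨aux_integrable ?_ hF hS hae, ?_⟩
  · have := auxw_meas
    apply Measurable.aestronglyMeasurable
    fun_prop
  · have := hasSum_integral_of_summable_integral_norm hF hS
    simp_rw [hI] at this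
    rw [integral_congr_ae (g := fun t => ∑' k, F k t)]
    · exact this
    · filter_upwards [hae] with t ht
      exact ht.tsum_eq.symm

open Filter Topology in
lemma aux_tan (ζ : ℂ) (h1 : -1 < ζ.re) (h2 : ζ.re < 1) :
    Tendsto (fun N : ℕ => ∑ k ∈ Finset.range N, (2 / (2 * (k:ℂ) + 1 - ζ) - 2 / (2 * (k:ℂ) + 1 + ζ)))
      atTop (𝓝 (Real.pi * Complex.tan (Real.pi * ζ / 2))) := by
  have hx : (1 - ζ) / 2 ∈ Complex.integerComplement := by
    rintro ⟨n, hn⟩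
    have := congrArg Complex.re hn
    simp at this
    have a : (0:ℝ) < n := by linarith
    have b : (n:ℝ) < 1 := by linarith
    norm_cast at a b
    omega
  have hne : ∀ k : ℕ, 2 * (k:ℂ) + 1 - ζ ≠ 0 := fun k h => by
    have := congrArg Complex.re h
    have : (0:ℝ) ≤ k := k.cast_nonneg
    simp at *; linarith
  have hne' : ∀ k : ℕ, 2 * (k:ℂ) + 1 + ζ ≠ 0 := fun k h => by
    have := congrArg Complex.re h
    have : (0:ℝ) ≤ k := k.cast_nonneg
    simp at *; linarith
  have h := tendsto_logDeriv_euler_cot_sub hx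
  have hcot : Complex.cot (Real.pi * ((1 - ζ) / 2)) = Complex.tan (Real.pi * ζ / 2) := by
    rw [Complex.cot, Complex.tan, show (Real.pi:ℂ) * ((1 - ζ) / 2) = Real.pi / 2 - Real.pi * ζ / 2 by ring,
      Complex.cos_pi_div_two_sub, Complex.sin_pi_div_two_sub]
  rw [hcot] at h
  have hpart : ∀ N : ℕ, ∑ k ∈ Finset.range N, (2 / (2 * (k:ℂ) + 1 - ζ) - 2 / (2 * (k:ℂ) + 1 + ζ))
      = ∑ j ∈ Finset.range N, cotTerm ((1 - ζ) / 2) j + 1 / ((1 - ζ) / 2) - 2 / (2 * (N:ℂ) + 1 - ζ) := by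
    intro N
    induction N with
    | zero => simp [div_div_eq_mul_div]
    | succ n ih =>
      rw [Finset.sum_range_succ, Finset.sum_range_succ, ih, cotTerm]
      have e1 : (1 - ζ) / 2 - ((n:ℂ) + 1) = -(2 * (n:ℂ) + 1 + ζ) / 2 := by ring
      have e2 : (1 - ζ) / 2 + ((n:ℂ) + 1) = (2 * ((n + 1 : ℕ):ℂ) + 1 - ζ) / 2 := by push_cast; ring
      rw [e1, e2]
      generalize (2 * ((n + 1 : ℕ):ℂ) + 1 - ζ) = y
      simp only [one_div_div, div_neg]
      ring
  have htail : Tendsto (fun N : ℕ => 2 / (2 * (N:ℂ) + 1 - ζ)) atTop (𝓝 0) := by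
    simp only [div_eq_mul_inv]
    rw [← mul_zero (2:ℂ)]
    refine Tendsto.const_mul _ (Filter.tendsto_inv₀_cobounded.comp ?_)
    have a : Tendsto (fun N : ℕ => (2 * (N:ℝ) + 1 - ζ.re)) atTop atTop := by
      apply tendsto_atTop_add_const_right
      apply tendsto_atTop_add_const_right
      exact tendsto_natCast_atTop_atTop.const_mul_atTop two_pos
    rw [← tendsto_norm_atTop_iff_cobounded]
    refine tendsto_atTop_mono (fun N => ?_) a
    have := Complex.re_le_norm (2 * (N:ℂ) + 1 - ζ)
    simpa using this
  simp_rw [hpart]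
  convert (h.add_const (1 / ((1 - ζ) / 2))).sub htail using 2
  ring

lemma aux_sum (ζ : ℂ) (h1 : -1 < ζ.re) (h2 : ζ.re < 1) (h0 : ζ ≠ 0) {A B : ℂ}
    (hA : HasSum (fun k : ℕ => 2 / (2 * (k:ℂ) + 1) * (1 / (ζ + 2 * k + 1))) A)
    (hB : HasSum (fun k : ℕ => 2 / (2 * (k:ℂ) + 1) * (1 / (-ζ + 2 * k + 1))) B) :
    A + B = ((Real.pi : ℂ) / ζ) * Complex.tan (Real.pi * ζ / 2) := by
  have hne : ∀ k : ℕ, 2 * (k:ℂ) + 1 - ζ ≠ 0 := fun k h => by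
    have := congrArg Complex.re h
    have : (0:ℝ) ≤ k := k.cast_nonneg
    simp at *; linarith
  have hne' : ∀ k : ℕ, 2 * (k:ℂ) + 1 + ζ ≠ 0 := fun k h => by
    have := congrArg Complex.re h
    have : (0:ℝ) ≤ k := k.cast_nonneg
    simp at *; linarith
  have hS := ((hA.add hB).mul_left ζ).tendsto_sum_nat
  have hT := aux_tan ζ h1 h2
  have e : ζ * (A + B) = Real.pi * Complex.tan (Real.pi * ζ / 2) := by
    refine tendsto_nhds_unique hS (hT.congr fun N => Finset.sum_congr rfl fun k _ => ?_)
    have a := hne k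
    have b := hne' k
    have c : 2 * (k:ℂ) + 1 ≠ 0 := by exact_mod_cast Nat.succ_ne_zero (2 * k)
    rw [show ζ + 2 * k + 1 = 2 * (k:ℂ) + 1 + ζ by ring,
      show -ζ + 2 * k + 1 = 2 * (k:ℂ) + 1 - ζ by ring]
    field_simp
    ring
  rw [div_mul_eq_mul_div, ← e]
  field_simp

lemma aux_mellin (ζ : ℂ) (h1 : -1 < ζ.re) :
    MellinConvergent ((Set.Ioo 0 1).indicator auxw) ζ ∧
    HasSum (fun k : ℕ => 2 / (2 * (k:ℂ) + 1) * (1 / (ζ + 2 * k + 1)))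
      (mellin ((Set.Ioo 0 1).indicator auxw) ζ) := by
  obtain ⟨hi, hs⟩ := aux_key ζ h1
  have e : (fun t : ℝ => (t : ℂ) ^ (ζ - 1) • (Set.Ioo 0 1).indicator auxw t)
      = (Set.Ioo 0 1).indicator (fun t : ℝ => (t : ℂ) ^ (ζ - 1) * auxw t) := by
    ext t
    simp only [Set.indicator_apply]
    split_ifs <;> simp
  constructor
  · rw [MellinConvergent, e]
    exact (hi.integrable_indicator measurableSet_Ioo).integrableOn
  · rw [mellin, e, setIntegral_indicator measurableSet_Ioo,
      Set.inter_eq_self_of_subset_right (fun t ht => ht.1)]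
    exact hs

/-- The Mellin transform of `w(t) = log|(1+t)/(1−t)|`: for `ζ ∈ ℂ` with
`−1 < Re ζ < 1`, `ζ ≠ 0`, the function `t ↦ t^{ζ−1} w(t)` is integrable on `(0,∞)` and
`∫₀^∞ t^ζ w(t) dt/t = (π/ζ) tan(πζ/2)`. -/
theorem mellin_log_kernel (ζ : ℂ) (h1 : -1 < ζ.re) (h2 : ζ.re < 1) (h0 : ζ ≠ 0) :
    IntegrableOn
      (fun t : ℝ => (t : ℂ) ^ (ζ - 1) * (Real.log |(1 + t) / (1 - t)| : ℂ))
      (Set.Ioi 0) ∧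
    ∫ t in Set.Ioi (0:ℝ), (t : ℂ) ^ (ζ - 1) * (Real.log |(1 + t) / (1 - t)| : ℂ)
      = ((Real.pi : ℂ) / ζ) * Complex.tan (Real.pi * ζ / 2) := by
  obtain ⟨c1, s1⟩ := aux_mellin ζ h1
  obtain ⟨c2, s2⟩ := aux_mellin (-ζ) (by simpa using by linarith)
  have c2' : MellinConvergent (fun t => (Set.Ioo 0 1).indicator auxw t⁻¹) ζ := by
    have := (MellinConvergent.comp_rpow (f := (Set.Ioo 0 1).indicator auxw) (s := ζ)
      (a := -1) (by norm_num)).2 (by simpa [div_neg] using c2)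
    simpa [Real.rpow_neg_one] using this
  rw [← mellin_comp_inv] at s2
  obtain ⟨m1, m2⟩ := hasMellin_add c1 c2'
  have e : Set.EqOn (fun t : ℝ => (t : ℂ) ^ (ζ - 1) • ((Set.Ioo 0 1).indicator auxw t
      + (Set.Ioo 0 1).indicator auxw t⁻¹))
      (fun t : ℝ => (t : ℂ) ^ (ζ - 1) * (Real.log |(1 + t) / (1 - t)| : ℂ)) (Set.Ioi 0) := by
    intro t ht
    have ht : 0 < t := ht
    have hw : (Real.log |(1 + t) / (1 - t)| : ℂ) = auxw t := rfl
    simp only [hw, smul_eq_mul]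
    congr 1
    rcases lt_trichotomy t 1 with h | h | h
    · rw [Set.indicator_of_mem (show t ∈ Set.Ioo (0:ℝ) 1 from ⟨ht, h⟩),
        Set.indicator_of_notMem, add_zero]
      intro h'
      have := (one_lt_inv₀ ht).2 h
      linarith [h'.2]
    · subst h
      simp [auxw]
    · rw [Set.indicator_of_notMem, Set.indicator_of_mem, auxw_inv ht, zero_add]
      · exact ⟨inv_pos.2 ht, inv_lt_one_of_one_lt₀ h⟩
      · intro h'
        linarith [h'.2]
  rw [MellinConvergent, integrableOn_congr_fun e measurableSet_Ioi] at m1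
  rw [mellin, setIntegral_congr_fun measurableSet_Ioi e] at m2
  exact ⟨m1, m2.trans (aux_sum ζ h1 h2 h0 s1 s2)⟩
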